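/- arXiv:2401.15728 — 3 statements merged into one kernel-verified Lean document; each statement's English description precedes it below -/
import Mathlib

section
/- Fix real numbers t ≤ T₁ < T₂ with Σ_rr(t,T₁) > 0, assume γ(u) > 0 for all u ∈ [T₁,T₂], and let D > 0 and y ∈ ℝ. Then the Gaussian average over η of the first-order 1M SOFR futures value at time T₁ reproduces the 1M SOFR futures price formula: ∫_ℝ ( −log D + ∫_{T₁}^{T₂} ( R⁺(η,T₁,t₁) − R⁻(η,T₁,t₁) + R₁*(t₁) ) dt₁ ) N(η; φ_r(t,T₁)·y, Σ_rr(t,T₁)) dη = −log D + ∫_{T₁}^{T₂} [ (ψ_r(t,t₁)/γ(t₁)) · sinh( γ(t₁)·( φ_r(t,t₁)·y + y*(t₁) ) ) + R₁*(t₁) ] dt₁. -/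
open MeasureTheory Real

/-- Mean reversion factor `φ_r(t,v) = exp(−∫_t^v α)`. -/
noncomputable def phiR (α : ℝ → ℝ) (t v : ℝ) : ℝ := Real.exp (-(∫ u in t..v, α u))

/-- Variance of the short-rate factor `Σ_rr(t,v)`. -/
noncomputable def Srr (α σ : ℝ → ℝ) (t v : ℝ) : ℝ := ∫ u in t..v, (phiR α u v) ^ 2 * (σ u) ^ 2

/-- Smile dispersion factor `ψ_r(t,v)`. -/
noncomputable def psiR (α σ γ : ℝ → ℝ) (t v : ℝ) : ℝ :=
  Real.exp ((1 / 2) * (γ v) ^ 2 * Srr α σ t v)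

/-- Rate–integral covariance `Σ_rz(t,v)`. -/
noncomputable def Srz (α σ γ : ℝ → ℝ) (t v : ℝ) : ℝ :=
  ∫ u in t..v, psiR α σ γ t u * phiR α u v * Srr α σ t u

/-- Variance of the compounding variable `Σ_zz(t,v)`. -/
noncomputable def Szz (α σ γ : ℝ → ℝ) (t v : ℝ) : ℝ :=
  2 * ∫ u in t..v, psiR α σ γ t u * Srz α σ γ t u

/-- `B*(t,v) = ∫_t^v ψ_r(t,u) φ_r(t,u) du`. -/
noncomputable def Bstar (α σ γ : ℝ → ℝ) (t v : ℝ) : ℝ :=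
  ∫ u in t..v, psiR α σ γ t u * phiR α t u

/-- Drift of the compounding variable `μ*(y,t,v)`. -/
noncomputable def muStar (α σ γ : ℝ → ℝ) (y t v : ℝ) : ℝ :=
  Bstar α σ γ t v * (y + Srz α σ γ 0 t) + (1 / 2) * (Bstar α σ γ t v) ^ 2 * Srr α σ 0 t

/-- One-dimensional Gaussian density with mean `m` and variance `s`. -/
noncomputable def gauss (x m s : ℝ) : ℝ :=
  (Real.sqrt (2 * Real.pi * s))⁻¹ * Real.exp (-(x - m) ^ 2 / (2 * s))

/-- Centered bivariate Gaussian density with covariance `!![srr, srz; srz, szz]` at `(a, b)`. -/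
noncomputable def gauss2 (a b srr srz szz : ℝ) : ℝ :=
  (2 * Real.pi * Real.sqrt (srr * szz - srz ^ 2))⁻¹ *
    Real.exp (-(szz * a ^ 2 - 2 * srz * a * b + srr * b ^ 2) / (2 * (srr * szz - srz ^ 2)))

/-- The leading-order (Hull–White) Green's function `G₀`. -/
noncomputable def G0 (α σ γ : ℝ → ℝ) (y z t η ζ v : ℝ) : ℝ :=
  gauss2 (η - phiR α t v * y) (ζ - z - muStar α σ γ y t v)
    (Srr α σ t v) (Srz α σ γ t v) (Szz α σ γ t v)


/-- The smile factor `R⁺(y,t,u)`. -/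
noncomputable def Rplus (α σ γ ystar : ℝ → ℝ) (y t u : ℝ) : ℝ :=
  Real.exp ((1 / 2) * (γ u) ^ 2 * Srr α σ t u + γ u * (phiR α t u * y + ystar u)) / (2 * γ u)

/-- The smile factor `R⁻(y,t,u)`. -/
noncomputable def Rminus (α σ γ ystar : ℝ → ℝ) (y t u : ℝ) : ℝ :=
  Real.exp ((1 / 2) * (γ u) ^ 2 * Srr α σ t u - γ u * (phiR α t u * y + ystar u)) / (2 * γ u)

/-- The argument shift `Δy(t,u)`. -/
noncomputable def dY (α σ γ : ℝ → ℝ) (t u : ℝ) : ℝ := γ u * Srr α σ t u / phiR α t u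

/-- The argument shift `Δz(t,u)`. -/
noncomputable def dZ (α σ γ : ℝ → ℝ) (t u : ℝ) : ℝ :=
  γ u * Srz α σ γ t u - Bstar α σ γ t u * dY α σ γ t u

/-- `∂_z G₀` in the backward variable `z`. -/
noncomputable def dzG0 (α σ γ : ℝ → ℝ) (y z t η ζ v : ℝ) : ℝ :=
  deriv (fun z' => G0 α σ γ y z' t η ζ v) z

/-- `∂_y ∂_z G₀` in the backward variables. -/
noncomputable def dydzG0 (α σ γ : ℝ → ℝ) (y z t η ζ v : ℝ) : ℝ :=
  deriv (fun y' => dzG0 α σ γ y' z t η ζ v) y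

/-- `∂_z² G₀` in the backward variable `z`. -/
noncomputable def dzzG0 (α σ γ : ℝ → ℝ) (y z t η ζ v : ℝ) : ℝ :=
  deriv (fun z' => dzG0 α σ γ y z' t η ζ v) z

/-- The first-order Green's function correction `G₁`. -/
noncomputable def G1 (α σ γ ystar R1star : ℝ → ℝ) (y z t η ζ v : ℝ) : ℝ :=
  (∫ t₁ in t..v,
      (Rplus α σ γ ystar y t t₁ *
          dzG0 α σ γ (y + dY α σ γ t t₁) (z + dZ α σ γ t t₁) t η ζ v
        - Rminus α σ γ ystar y t t₁ *
            dzG0 α σ γ (y - dY α σ γ t t₁) (z - dZ α σ γ t t₁) t η ζ v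
        + R1star t₁ * dzG0 α σ γ y z t η ζ v))
    - muStar α σ γ y t v * dzG0 α σ γ y z t η ζ v
    - (Srz α σ γ t v / phiR α t v) *
        (dydzG0 α σ γ y z t η ζ v - Bstar α σ γ t v * dzzG0 α σ γ y z t η ζ v)
    - Szz α σ γ t v * dzzG0 α σ γ y z t η ζ v


/-!
Since `R⁺ - R⁻ = (ψ_r / γ) sinh (γ (φ_r y + y*))`, the futures integrand is, at each fixed time
`t₁`, a hyperbolic sine of an affine function of the state. Averaging `sinh (b η + c)` against a
Gaussian law of variance `s` evaluates it at the mean and multiplies it by `exp (s b² / 2)`. The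
identities `φ_r(t,u) = φ_r(t,T) φ_r(T,u)` and `Σ_rr(t,u) = φ_r(T,u)² Σ_rr(t,T) + Σ_rr(T,u)` say
that this factor turns `ψ_r(T,u)` into `ψ_r(t,u)`. Fubini's theorem moves the average inside the
time integral.
-/

open ProbabilityTheory

lemma integral_const_add_intervalIntegral_swap {Ω E : Type*} [MeasurableSpace Ω] {μ : Measure Ω}
    [IsProbabilityMeasure μ] [NormedAddCommGroup E] [NormedSpace ℝ E] [CompleteSpace E]
    {a b : ℝ} {f : ℝ → Ω → E} (c : E)
    (hf : Integrable (Function.uncurry f) ((volume.restrict (Set.uIoc a b)).prod μ)) :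
    ∫ x, (c + ∫ u in a..b, f u x) ∂μ = c + ∫ u in a..b, ∫ x, f u x ∂μ := by
  have hint : Integrable (fun x => ∫ u in a..b, f u x) μ := by
    simp only [intervalIntegral.intervalIntegral_eq_integral_uIoc]
    exact hf.integral_prod_right.smul _
  rw [integral_add (integrable_const c) hint, intervalIntegral_integral_swap hf, integral_const,
    probReal_univ, one_smul]

lemma abs_sinh_le_exp_abs (x : ℝ) : |Real.sinh x| ≤ Real.exp |x| := by
  rw [Real.abs_sinh, ← Real.sinh_add_cosh]
  exact le_add_of_nonneg_right (Real.cosh_pos _).le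

lemma abs_sinh_affine_le {b c B C : ℝ} (hb : |b| ≤ B) (hc : |c| ≤ C) (x : ℝ) :
    |Real.sinh (b * x + c)| ≤ Real.exp (B * |x|) * Real.exp C := by
  have harg : |b * x + c| ≤ B * |x| + C :=
    calc |b * x + c| ≤ |b| * |x| + |c| := abs_mul b x ▸ abs_add_le _ _
      _ ≤ B * |x| + C := by gcongr
  rw [← Real.exp_add]
  exact (abs_sinh_le_exp_abs _).trans (Real.exp_le_exp.2 harg)

lemma integrable_mul_sinh_affine_prod {X : Type*} [TopologicalSpace X] [T2Space X]
    [MeasurableSpace X] [OpensMeasurableSpace X] {ν : Measure X} [IsFiniteMeasureOnCompacts ν]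
    {μ : Measure ℝ} [SFinite μ] {K : Set X} {p b c : X → ℝ} (hK : IsCompact K)
    (hp : ContinuousOn p K) (hb : ContinuousOn b K) (hc : ContinuousOn c K)
    (hμ : ∀ k : ℝ, Integrable (fun x => Real.exp (k * x)) μ) :
    Integrable (fun z : X × ℝ => p z.1 * Real.sinh (b z.1 * z.2 + c z.1))
      ((ν.restrict K).prod μ) := by
  obtain ⟨P, hP⟩ := hK.exists_bound_of_continuousOn hp
  obtain ⟨B, hB⟩ := hK.exists_bound_of_continuousOn hb
  obtain ⟨C, hC⟩ := hK.exists_bound_of_continuousOn hc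
  have : IsFiniteMeasure (ν.restrict K) := isFiniteMeasure_restrict.2 hK.measure_ne_top
  have hmeas {f : X → ℝ} (hf : ContinuousOn f K) : AEStronglyMeasurable f (ν.restrict K) :=
    hf.aestronglyMeasurable hK.measurableSet
  have hbound : Integrable (fun z : X × ℝ => P * (Real.exp (B * |z.2|) * Real.exp C))
      ((ν.restrict K).prod μ) :=
    (((integrable_exp_mul_abs (hμ B) (hμ (-B))).mul_const _).const_mul P).comp_snd _
  refine hbound.mono' ((hmeas hp).comp_fst.mul (Real.continuous_sinh.comp_aestronglyMeasurable
    (((hmeas hb).comp_fst.mul measurable_snd.aestronglyMeasurable).add (hmeas hc).comp_fst))) ?_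
  have hK_ae : ∀ᵐ z ∂(ν.restrict K).prod μ, z.1 ∈ K :=
    Measure.quasiMeasurePreserving_fst.ae (ae_restrict_mem hK.measurableSet)
  filter_upwards [hK_ae] with z hz
  rw [norm_mul]
  exact mul_le_mul (hP _ hz) (abs_sinh_affine_le (hB _ hz) (hC _ hz) _) (norm_nonneg _)
    ((norm_nonneg _).trans (hP _ hz))

lemma integral_mul_gauss (f : ℝ → ℝ) (m : ℝ) {s : ℝ} (hs : 0 < s) :
    ∫ x, f x * gauss x m s = ∫ x, f x ∂gaussianReal m s.toNNReal := by
  rw [integral_gaussianReal_eq_integral_smul (Real.toNNReal_pos.2 hs).ne']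
  simp only [smul_eq_mul, mul_comm (f _), gauss, gaussianPDFReal, Real.coe_toNNReal _ hs.le]

lemma integral_exp_affine_gaussianReal (m : ℝ) (s : NNReal) (b c : ℝ) :
    ∫ x, Real.exp (b * x + c) ∂gaussianReal m s = Real.exp (s * b ^ 2 / 2 + (b * m + c)) := by
  have hmgf : ∫ x, Real.exp (b * x) ∂gaussianReal m s = Real.exp (m * b + s * b ^ 2 / 2) :=
    mgf_gaussianReal (X := id) Measure.map_id b
  simp_rw [fun x => Real.exp_add (b * x) c]
  rw [integral_mul_const, hmgf, ← Real.exp_add]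
  ring_nf

lemma integral_sinh_affine_gaussianReal (m : ℝ) (s : NNReal) (b c : ℝ) :
    ∫ x, Real.sinh (b * x + c) ∂gaussianReal m s =
      Real.exp (s * b ^ 2 / 2) * Real.sinh (b * m + c) := by
  have hint (b c : ℝ) : Integrable (fun x => Real.exp (b * x + c)) (gaussianReal m s) := by
    simpa only [Real.exp_add] using (integrable_exp_mul_gaussianReal b).mul_const (Real.exp c)
  have hneg (x : ℝ) : -(b * x + c) = -b * x + -c := by ring
  simp only [Real.sinh_eq, hneg]
  rw [integral_div, integral_sub (hint b c) (hint (-b) (-c)), integral_exp_affine_gaussianReal,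
    integral_exp_affine_gaussianReal, neg_sq, ← hneg, Real.exp_add _ (b * m + c),
    Real.exp_add _ (-(b * m + c))]
  ring

section

variable {α σ : ℝ → ℝ}

lemma phiR_mul_phiR (hα : ∀ a b, IntervalIntegrable α volume a b) (a b c : ℝ) :
    phiR α a b * phiR α b c = phiR α a c := by
  rw [phiR, phiR, phiR, ← Real.exp_add,
    ← intervalIntegral.integral_add_adjacent_intervals (hα a b) (hα b c), neg_add]

lemma continuous_phiR_right (hα : ∀ a b, IntervalIntegrable α volume a b) (t : ℝ) :
    Continuous fun v => phiR α t v :=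
  Real.continuous_exp.comp (intervalIntegral.continuous_primitive hα t).neg

lemma continuous_phiR_left (hα : ∀ a b, IntervalIntegrable α volume a b) (v : ℝ) :
    Continuous fun t => phiR α t v := by
  simp only [phiR, intervalIntegral.integral_symm v, neg_neg]
  exact Real.continuous_exp.comp (intervalIntegral.continuous_primitive hα v)

lemma intervalIntegrable_sq_phiR_mul_sq (hα : ∀ a b, IntervalIntegrable α volume a b)
    (hσ : ∀ a b, IntervalIntegrable (fun u => σ u ^ 2) volume a b) (v a b : ℝ) :
    IntervalIntegrable (fun u => phiR α u v ^ 2 * σ u ^ 2) volume a b :=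
  (hσ a b).continuousOn_mul ((continuous_phiR_left hα v).pow 2).continuousOn

lemma Srr_eq_sq_phiR_mul_integral (hα : ∀ a b, IntervalIntegrable α volume a b) (a b c : ℝ) :
    Srr α σ a c = phiR α b c ^ 2 * ∫ u in a..c, phiR α u b ^ 2 * σ u ^ 2 := by
  rw [Srr, ← intervalIntegral.integral_const_mul]
  refine intervalIntegral.integral_congr fun u _ => ?_
  rw [← phiR_mul_phiR hα u b c]
  ring

lemma Srr_eq_sq_phiR_mul_Srr_add_Srr (hα : ∀ a b, IntervalIntegrable α volume a b)
    (hσ : ∀ a b, IntervalIntegrable (fun u => σ u ^ 2) volume a b) (a b c : ℝ) :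
    Srr α σ a c = phiR α b c ^ 2 * Srr α σ a b + Srr α σ b c := by
  have hint := intervalIntegrable_sq_phiR_mul_sq hα hσ b
  rw [Srr_eq_sq_phiR_mul_integral hα a b c, Srr_eq_sq_phiR_mul_integral hα b b c,
    ← intervalIntegral.integral_add_adjacent_intervals (hint a b) (hint b c), mul_add, Srr]

lemma continuous_Srr_right (hα : ∀ a b, IntervalIntegrable α volume a b)
    (hσ : ∀ a b, IntervalIntegrable (fun u => σ u ^ 2) volume a b) (t : ℝ) :
    Continuous fun v => Srr α σ t v := by
  simp only [Srr_eq_sq_phiR_mul_integral hα t t]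
  exact ((continuous_phiR_right hα t).pow 2).mul
    (intervalIntegral.continuous_primitive (intervalIntegrable_sq_phiR_mul_sq hα hσ t) t)

lemma psiR_eq_exp_mul_psiR (hα : ∀ a b, IntervalIntegrable α volume a b)
    (hσ : ∀ a b, IntervalIntegrable (fun u => σ u ^ 2) volume a b) (γ : ℝ → ℝ) (a b c : ℝ) :
    psiR α σ γ a c =
      Real.exp (Srr α σ a b * (γ c * phiR α b c) ^ 2 / 2) * psiR α σ γ b c := by
  rw [psiR, psiR, ← Real.exp_add, Srr_eq_sq_phiR_mul_Srr_add_Srr hα hσ a b c]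
  ring_nf

lemma Rplus_sub_Rminus_eq_mul_sinh (γ ystar : ℝ → ℝ) (y t u : ℝ) :
    Rplus α σ γ ystar y t u - Rminus α σ γ ystar y t u =
      psiR α σ γ t u / γ u * Real.sinh (γ u * phiR α t u * y + γ u * ystar u) := by
  rw [Rplus, Rminus, psiR, Real.sinh_eq, Real.exp_add, sub_eq_add_neg (_ * _ * _), Real.exp_add,
    mul_add, mul_assoc (γ u)]
  ring

lemma integral_Rplus_sub_Rminus_gaussianReal
    (hα : ∀ a b, IntervalIntegrable α volume a b)
    (hσ : ∀ a b, IntervalIntegrable (fun u => σ u ^ 2) volume a b) (γ ystar : ℝ → ℝ)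
    {t T : ℝ} (hS : 0 ≤ Srr α σ t T) (y u : ℝ) :
    ∫ η, (Rplus α σ γ ystar η T u - Rminus α σ γ ystar η T u)
        ∂gaussianReal (phiR α t T * y) (Srr α σ t T).toNNReal =
      psiR α σ γ t u / γ u * Real.sinh (γ u * (phiR α t u * y + ystar u)) := by
  simp only [Rplus_sub_Rminus_eq_mul_sinh, integral_const_mul, integral_sinh_affine_gaussianReal,
    Real.coe_toNNReal _ hS]
  rw [psiR_eq_exp_mul_psiR hα hσ γ t T u, ← phiR_mul_phiR hα t T u]
  ring_nf

lemma integrable_Rplus_sub_Rminus_prod {γ ystar : ℝ → ℝ} {T₁ T₂ : ℝ} {μ : Measure ℝ}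
    [SFinite μ] (hα : ∀ a b, IntervalIntegrable α volume a b)
    (hσ : ∀ a b, IntervalIntegrable (fun u => σ u ^ 2) volume a b)
    (hγ : ContinuousOn γ (Set.uIcc T₁ T₂)) (hys : ContinuousOn ystar (Set.uIcc T₁ T₂))
    (hγ0 : ∀ u ∈ Set.uIcc T₁ T₂, γ u ≠ 0)
    (hμ : ∀ k : ℝ, Integrable (fun x => Real.exp (k * x)) μ) :
    Integrable (fun z : ℝ × ℝ => Rplus α σ γ ystar z.2 T₁ z.1 - Rminus α σ γ ystar z.2 T₁ z.1)
      ((volume.restrict (Set.uIoc T₁ T₂)).prod μ) := by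
  have hφ := (continuous_phiR_right hα T₁).continuousOn (s := Set.uIcc T₁ T₂)
  have hS := (continuous_Srr_right hα hσ T₁).continuousOn (s := Set.uIcc T₁ T₂)
  have hψ : ContinuousOn (fun u => psiR α σ γ T₁ u) (Set.uIcc T₁ T₂) := by
    unfold psiR
    fun_prop
  simp only [Rplus_sub_Rminus_eq_mul_sinh]
  exact (integrable_mul_sinh_affine_prod isCompact_uIcc (hψ.div hγ hγ0) (hγ.mul hφ)
    (hγ.mul hys) hμ).mono_measure
      (Measure.prod_mono (Measure.restrict_mono_set _ Set.uIoc_subset_uIcc) le_rfl)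

end

theorem sofr_1M_second_stage_general {α σ γ ystar R1star : ℝ → ℝ} {t T₁ T₂ : ℝ}
    (hα : ∀ a b, IntervalIntegrable α volume a b)
    (hσ : ∀ a b, IntervalIntegrable (fun u => σ u ^ 2) volume a b)
    (hγ : ContinuousOn γ (Set.uIcc T₁ T₂)) (hys : ContinuousOn ystar (Set.uIcc T₁ T₂))
    (hR1 : IntervalIntegrable R1star volume T₁ T₂) (hrr : 0 < Srr α σ t T₁)
    (hγ0 : ∀ u ∈ Set.uIcc T₁ T₂, γ u ≠ 0) (c y : ℝ) :
    (∫ η : ℝ,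
        (c + ∫ t₁ in T₁..T₂,
              (Rplus α σ γ ystar η T₁ t₁ - Rminus α σ γ ystar η T₁ t₁ + R1star t₁)) *
          gauss η (phiR α t T₁ * y) (Srr α σ t T₁))
      = c + ∫ t₁ in T₁..T₂,
            (psiR α σ γ t t₁ / γ t₁ *
                Real.sinh (γ t₁ * (phiR α t t₁ * y + ystar t₁)) +
              R1star t₁) := by
  rw [integral_mul_gauss _ _ hrr]
  set μ := gaussianReal (phiR α t T₁ * y) (Srr α σ t T₁).toNNReal
  have hR := integrable_Rplus_sub_Rminus_prod (μ := μ) hα hσ hγ hys hγ0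
    integrable_exp_mul_gaussianReal
  rw [integral_const_add_intervalIntegral_swap c (hR.add (hR1.def'.comp_fst μ))]
  congr 1
  refine intervalIntegral.integral_congr_ae_restrict ?_
  filter_upwards [hR.prod_right_ae] with u hu
  rw [integral_add hu (integrable_const _), integral_const, probReal_univ, one_smul,
    integral_Rplus_sub_Rminus_gaussianReal hα hσ γ ystar hrr.le]

theorem sofr_1M_second_stage (α σ γ ystar R1star : ℝ → ℝ)
    (hα : Continuous α) (hσc : Continuous σ) (hγc : Continuous γ)
    (hys : Continuous ystar) (hR1 : Continuous R1star)
    (t T₁ T₂ D y : ℝ) (ht : t ≤ T₁) (h12 : T₁ < T₂)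
    (hrr : 0 < Srr α σ t T₁)
    (hγ : ∀ u ∈ Set.Icc T₁ T₂, 0 < γ u) (hD : 0 < D) :
    (∫ η : ℝ,
        (-Real.log D +
            ∫ t₁ in T₁..T₂,
              (Rplus α σ γ ystar η T₁ t₁ - Rminus α σ γ ystar η T₁ t₁ + R1star t₁)) *
          gauss η (phiR α t T₁ * y) (Srr α σ t T₁))
      = -Real.log D +
          ∫ t₁ in T₁..T₂,
            (psiR α σ γ t t₁ / γ t₁ *
                Real.sinh (γ t₁ * (phiR α t t₁ * y + ystar t₁)) +
              R1star t₁) := by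
  exact sofr_1M_second_stage_general hα.intervalIntegrable (hσc.pow 2).intervalIntegrable
    hγc.continuousOn hys.continuousOn (hR1.intervalIntegrable T₁ T₂) hrr
    (fun u hu => (hγ u (Set.uIcc_of_le h12.le ▸ hu)).ne') (-Real.log D) y
end

section
/- Fix T₁ < T₂ with the covariance matrix Σ(T₁,T₂) positive definite, assume γ(u) > 0 for u ∈ [T₁,T₂], and let y, z ∈ ℝ. Then the first-order correction to the 1M SOFR futures value at time T₁ is: ∫∫_{ℝ²} (ζ − z) · G₁(y,z,T₁; η,ζ,T₂) dη dζ = ∫_{T₁}^{T₂} [ R⁺(y,T₁,t₁) − R⁻(y,T₁,t₁) + R₁*(t₁) ] dt₁ − μ*(y,T₁,T₂); in particular the argument shifts Δy, Δz appearing in G₁ have no effect on this value. -/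
open MeasureTheory Real

/-! The kernel `G₀` is a Gaussian density `K` in `(η, ζ)`, translated by a mean which is affine in
the backward variables `(y, z)`. A derivative of `G₀` in `(y, z)` is therefore, up to sign, a
directional derivative of `K` at the translated point. Integration by parts gives `∂_z G₀` total
integral `0` and first moment `1` along `ζ`, and gives any second derivative total integral and
first moment `0`. For a function of total integral `0` the first moment is invariant under
translations. Hence the shifts `Δy`, `Δz`, as well as the base point `z` in `ζ - z`, play no role,
and the first moment of `G₁` is the total weight of the translates of `∂_z G₀` that it superposes.
-/

open scoped SchwartzMap LineDeriv ContDiff Nat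

/-- The integral of `f` vanishes and its first moment along the linear functional `ℓ` is `m`.
As for the dipole moment of an electrically neutral charge distribution, neutrality makes the
moment independent of the origin. Integrability is part of the notion, so that neither integral
is a junk value. -/
structure HasDipoleMoment {E : Type*} [NormedAddCommGroup E] [NormedSpace ℝ E]
    [MeasurableSpace E] (μ : Measure E) (ℓ : E →L[ℝ] ℝ) (f : E → ℝ) (m : ℝ) : Prop where
  integrable : Integrable f μ
  integral_eq_zero : ∫ x, f x ∂μ = 0
  integrable_mul : Integrable (fun x => ℓ x * f x) μ
  integral_mul : ∫ x, ℓ x * f x ∂μ = m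

section Superposition

variable {T G : Type*} [MeasurableSpace T] [AddGroup G] [MeasurableSpace G]
  [MeasurableAdd G] [MeasurableSub₂ G] {ν : Measure T} [SFinite ν] {μ : Measure G} [SFinite μ]
  [μ.IsAddRightInvariant] {A : T → ℝ} {f : G → ℝ} {n : T → G}

lemma integrable_mul_comp_sub_prod (hA : Integrable A ν) (hf : Integrable f μ)
    (hn : Measurable n) :
    Integrable (fun p : T × G => A p.1 * f (p.2 - n p.1)) (ν.prod μ) := by
  have hshear : MeasurePreserving (fun p : T × G => (p.1, p.2 - n p.1)) (ν.prod μ) (ν.prod μ) :=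
    (MeasurePreserving.id ν).skew_product (g := fun t x => x - n t)
      (measurable_snd.sub (hn.comp measurable_fst))
      (.of_forall fun t => (measurePreserving_sub_right μ (n t)).map_eq)
  exact hshear.integrable_comp_of_integrable (hA.mul_prod hf)

lemma integrable_integral_mul_comp_sub (hA : Integrable A ν) (hf : Integrable f μ)
    (hn : Measurable n) : Integrable (fun x => ∫ t, A t * f (x - n t) ∂ν) μ :=
  (integrable_mul_comp_sub_prod hA hf hn).integral_prod_right

lemma integral_integral_mul_comp_sub (hA : Integrable A ν) (hf : Integrable f μ)
    (hn : Measurable n) :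
    ∫ x, ∫ t, A t * f (x - n t) ∂ν ∂μ = (∫ t, A t ∂ν) * ∫ x, f x ∂μ := by
  have hint := integrable_mul_comp_sub_prod hA hf hn
  rw [← integral_prod_symm _ hint, integral_prod _ hint]
  simp only [integral_const_mul, integral_sub_right_eq_self f, integral_mul_const]

end Superposition

namespace HasDipoleMoment

variable {E : Type*} [NormedAddCommGroup E] [NormedSpace ℝ E] [MeasurableSpace E]
  {μ : Measure E} {ℓ : E →L[ℝ] ℝ} {f g : E → ℝ} {m m' : ℝ}

lemma add (hf : HasDipoleMoment μ ℓ f m) (hg : HasDipoleMoment μ ℓ g m') :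
    HasDipoleMoment μ ℓ (fun x => f x + g x) (m + m') where
  integrable := hf.integrable.add hg.integrable
  integral_eq_zero := by
    rw [integral_add hf.integrable hg.integrable, hf.integral_eq_zero, hg.integral_eq_zero,
      add_zero]
  integrable_mul := by
    simp only [mul_add]
    exact hf.integrable_mul.add hg.integrable_mul
  integral_mul := by
    simp only [mul_add]
    rw [integral_add hf.integrable_mul hg.integrable_mul, hf.integral_mul, hg.integral_mul]

lemma const_mul (hf : HasDipoleMoment μ ℓ f m) (k : ℝ) :
    HasDipoleMoment μ ℓ (fun x => k * f x) (k * m) where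
  integrable := hf.integrable.const_mul k
  integral_eq_zero := by rw [integral_const_mul, hf.integral_eq_zero, mul_zero]
  integrable_mul := by simpa only [mul_left_comm] using hf.integrable_mul.const_mul k
  integral_mul := by simp only [mul_left_comm _ k, integral_const_mul, hf.integral_mul]

lemma neg (hf : HasDipoleMoment μ ℓ f m) : HasDipoleMoment μ ℓ (fun x => -f x) (-m) := by
  simpa only [neg_one_mul] using hf.const_mul (-1)

lemma sub (hf : HasDipoleMoment μ ℓ f m) (hg : HasDipoleMoment μ ℓ g m') :
    HasDipoleMoment μ ℓ (fun x => f x - g x) (m - m') := by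
  simpa only [sub_eq_add_neg] using hf.add hg.neg

lemma integrable_sub_const_mul (hf : HasDipoleMoment μ ℓ f m) (c : ℝ) :
    Integrable (fun x => (ℓ x - c) * f x) μ := by
  simp only [sub_mul]
  exact hf.integrable_mul.sub (hf.integrable.const_mul c)

lemma integral_sub_const_mul (hf : HasDipoleMoment μ ℓ f m) (c : ℝ) :
    ∫ x, (ℓ x - c) * f x ∂μ = m := by
  simp only [sub_mul]
  rw [integral_sub hf.integrable_mul (hf.integrable.const_mul c), integral_const_mul,
    hf.integral_eq_zero, hf.integral_mul, mul_zero, sub_zero]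

section Translation

variable [BorelSpace E] [SecondCountableTopology E] [SFinite μ] [μ.IsAddRightInvariant]

/-- Moving each translate back to the origin changes its first moment by a multiple of the
integral of `f`, which is zero: the translations `n t` leave no trace in the moment. -/
lemma integral_mul_comp_sub (hf : HasDipoleMoment μ ℓ f m) {T : Type*} [MeasurableSpace T]
    {ν : Measure T} [SFinite ν] {A : T → ℝ} {n : T → E} (hA : Integrable A ν)
    (hn : Measurable n) (hAn : Integrable (fun t => A t * ℓ (n t)) ν) :
    HasDipoleMoment μ ℓ (fun x => ∫ t, A t * f (x - n t) ∂ν) ((∫ t, A t ∂ν) * m) := by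
  have hsplit : (fun x => ℓ x * ∫ t, A t * f (x - n t) ∂ν) =ᵐ[μ] fun x =>
      (∫ t, A t * (ℓ (x - n t) * f (x - n t)) ∂ν) + ∫ t, A t * ℓ (n t) * f (x - n t) ∂ν := by
    filter_upwards [(integrable_mul_comp_sub_prod hA hf.integrable_mul hn).prod_left_ae,
      (integrable_mul_comp_sub_prod hAn hf.integrable hn).prod_left_ae] with x hx₁ hx₂
    rw [← integral_const_mul, ← integral_add hx₁ hx₂]
    simp only [map_sub]
    congr 1 with t
    ring
  have hint₁ := integrable_integral_mul_comp_sub hA hf.integrable_mul hn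
  have hint₂ := integrable_integral_mul_comp_sub hAn hf.integrable hn
  refine ⟨integrable_integral_mul_comp_sub hA hf.integrable hn, ?_,
    (hint₁.add hint₂).congr hsplit.symm, ?_⟩
  · rw [integral_integral_mul_comp_sub hA hf.integrable hn, hf.integral_eq_zero, mul_zero]
  · rw [integral_congr_ae hsplit, integral_add hint₁ hint₂,
      integral_integral_mul_comp_sub hA hf.integrable_mul hn,
      integral_integral_mul_comp_sub hAn hf.integrable hn, hf.integral_mul,
      hf.integral_eq_zero, mul_zero, add_zero]

lemma comp_sub_right (hf : HasDipoleMoment μ ℓ f m) (a : E) :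
    HasDipoleMoment μ ℓ (fun x => f (x - a)) m := by
  simpa using hf.integral_mul_comp_sub (ν := Measure.dirac ()) (A := fun _ => 1)
    (n := fun _ => a) (integrable_const _) measurable_const (integrable_const _)

lemma intervalIntegral_mul_comp_sub (hf : HasDipoleMoment μ ℓ f m) {A : ℝ → ℝ} {n : ℝ → E}
    {a b : ℝ} (hA : IntervalIntegrable A volume a b) (hn : Continuous n) :
    HasDipoleMoment μ ℓ (fun x => ∫ t in a..b, A t * f (x - n t)) ((∫ t in a..b, A t) * m) := by
  have hAn : IntervalIntegrable (fun t => A t * ℓ (n t)) volume a b :=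
    hA.mul_continuousOn (by fun_prop)
  simpa only [intervalIntegral, sub_mul] using
    (hf.integral_mul_comp_sub hA.1 hn.measurable hAn.1).sub
      (hf.integral_mul_comp_sub hA.2 hn.measurable hAn.2)

end Translation

end HasDipoleMoment

section Schwartz

variable {E : Type*} [NormedAddCommGroup E] [NormedSpace ℝ E]

lemma one_add_pow_mul_exp_neg_mul_le {c x : ℝ} (hc : 0 < c) (hx : 0 ≤ x) (N : ℕ) :
    (1 + x) ^ N * Real.exp (-(c * x)) ≤ N ! / c ^ N * Real.exp c := by
  have h := Real.pow_div_factorial_le_exp (c * (1 + x)) (by positivity) N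
  rw [mul_one_add, Real.exp_add, ← mul_one_add, mul_pow, div_le_iff₀ (by positivity)] at h
  rw [Real.exp_neg, ← div_eq_mul_inv, div_le_iff₀ (by positivity), div_mul_eq_mul_div,
    div_mul_eq_mul_div, le_div_iff₀ (by positivity)]
  linarith

lemma norm_iteratedFDeriv_exp_neg_le {q : E → ℝ} (hq : q.HasTemperateGrowth) (n : ℕ) :
    ∃ (C : ℝ) (k : ℕ), 0 ≤ C ∧ ∀ x,
      ‖iteratedFDeriv ℝ n (fun x => Real.exp (-q x)) x‖ ≤
        C * (1 + ‖x‖) ^ k * Real.exp (-q x) := by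
  obtain ⟨k, C, hC, hbound⟩ := hq.neg.norm_iteratedFDeriv_le_uniform n
  refine ⟨n ! * (1 + C) ^ n, k * n, by positivity, fun x => ?_⟩
  have hD : 1 ≤ (1 + C) * (1 + ‖x‖) ^ k :=
    one_le_mul_of_one_le_of_one_le (by linarith) (one_le_pow₀ (by simp))
  have h := norm_iteratedFDeriv_comp_le (n := n) (N := ∞) Real.contDiff_exp hq.neg.1
    (mod_cast le_top) x (C := Real.exp (-q x)) (D := (1 + C) * (1 + ‖x‖) ^ k)
    (fun i _ => by
      simp [norm_iteratedFDeriv_eq_norm_iteratedDeriv, iteratedDeriv_eq_iterate])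
    (fun i hi hin => (hbound i hin x).trans <| le_trans (by gcongr; linarith)
      (le_self_pow₀ hD (by lia)))
  calc _ ≤ n ! * Real.exp (-q x) * ((1 + C) * (1 + ‖x‖) ^ k) ^ n := h
    _ = _ := by rw [mul_pow, ← pow_mul]; ring

/-- The function `exp (-q)` as a Schwartz function, for a temperate `q` growing at least
linearly at infinity. -/
noncomputable def schwartzExpNeg (q : E → ℝ) (hq : q.HasTemperateGrowth) {b c : ℝ} (hc : 0 < c)
    (hlower : ∀ x, c * ‖x‖ ≤ b + q x) : 𝓢(E, ℝ) where
  toFun x := Real.exp (-q x)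
  smooth' := Real.contDiff_exp.comp hq.1.neg
  decay' k n := by
    obtain ⟨C, l, hC, hbound⟩ := norm_iteratedFDeriv_exp_neg_le hq n
    refine ⟨C * Real.exp b * ((k + l)! / c ^ (k + l) * Real.exp c), fun x => ?_⟩
    calc _ ≤ (1 + ‖x‖) ^ k * (C * (1 + ‖x‖) ^ l * Real.exp (b + -(c * ‖x‖))) := by
          gcongr
          · linarith
          · refine (hbound x).trans ?_
            gcongr
            linarith [hlower x]
      _ = C * Real.exp b * ((1 + ‖x‖) ^ (k + l) * Real.exp (-(c * ‖x‖))) := by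
          rw [Real.exp_add, pow_add]; ring
      _ ≤ _ := by
          gcongr ?_ * ?_
          exact one_add_pow_mul_exp_neg_mul_le hc (norm_nonneg x) _

variable [FiniteDimensional ℝ E] [MeasurableSpace E] [BorelSpace E] {μ : Measure E}
  [μ.IsAddHaarMeasure]

lemma integrable_clm_mul_schwartz (ℓ : E →L[ℝ] ℝ) (f : 𝓢(E, ℝ)) :
    Integrable (fun x => ℓ x * f x) μ := by
  refine ((f.integrable_pow_mul μ 1).const_mul ‖ℓ‖).mono' (by fun_prop) (.of_forall fun x => ?_)
  rw [norm_mul, pow_one, ← mul_assoc]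
  gcongr
  exact ℓ.le_opNorm x

lemma integral_lineDerivOp_eq_zero (f : 𝓢(E, ℝ)) (v : E) : ∫ x, (∂_{v} f) x ∂μ = 0 := by
  have h := integral_mul_fderiv_eq_neg_fderiv_mul_of_integrable (μ := μ) (𝕜 := ℝ)
    (f := fun _ => 1) (g := f) (v := v) (by simp)
    (by simpa [SchwartzMap.lineDerivOp_apply_eq_fderiv] using (∂_{v} f).integrable)
    (by simpa using f.integrable) (by fun_prop) (by fun_prop)
  simpa [SchwartzMap.lineDerivOp_apply_eq_fderiv] using h

lemma integral_clm_mul_lineDerivOp (ℓ : E →L[ℝ] ℝ) (f : 𝓢(E, ℝ)) (v : E) :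
    ∫ x, ℓ x * (∂_{v} f) x ∂μ = -(ℓ v * ∫ x, f x ∂μ) := by
  have h := integral_mul_fderiv_eq_neg_fderiv_mul_of_integrable (μ := μ) (𝕜 := ℝ)
    (f := ℓ) (g := f) (v := v) (by simpa using f.integrable.const_mul (ℓ v))
    (integrable_clm_mul_schwartz ℓ (∂_{v} f))
    (integrable_clm_mul_schwartz ℓ f) (by fun_prop) (by fun_prop)
  simpa [SchwartzMap.lineDerivOp_apply_eq_fderiv, integral_const_mul] using h

lemma hasDipoleMoment_lineDerivOp (ℓ : E →L[ℝ] ℝ) (f : 𝓢(E, ℝ)) (v : E) :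
    HasDipoleMoment μ ℓ (∂_{v} f : 𝓢(E, ℝ)) (-(ℓ v * ∫ x, f x ∂μ)) where
  integrable := (∂_{v} f).integrable
  integral_eq_zero := integral_lineDerivOp_eq_zero f v
  integrable_mul := integrable_clm_mul_schwartz ℓ _
  integral_mul := integral_clm_mul_lineDerivOp ℓ f v

lemma hasDipoleMoment_lineDerivOp_lineDerivOp (ℓ : E →L[ℝ] ℝ) (f : 𝓢(E, ℝ)) (v w : E) :
    HasDipoleMoment μ ℓ (∂_{v} (∂_{w} f) : 𝓢(E, ℝ)) 0 := by
  simpa [integral_lineDerivOp_eq_zero] using hasDipoleMoment_lineDerivOp (μ := μ) ℓ (∂_{w} f) v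

end Schwartz

section GaussianKernel

open ProbabilityTheory

variable {r ρ q : ℝ}

lemma covariance_pos (h : (!![r, ρ; ρ, q]).PosDef) : 0 < r ∧ 0 < q ∧ 0 < r * q - ρ ^ 2 := by
  refine ⟨by simpa using h.diag_pos (i := 0), by simpa using h.diag_pos (i := 1), ?_⟩
  simpa [Matrix.det_fin_two_of, sq] using h.det_pos

lemma det_mul_sq_add_sq_le (r ρ q a b : ℝ) :
    (r * q - ρ ^ 2) * (a ^ 2 + b ^ 2) ≤
      (r + q) * (q * a ^ 2 - 2 * ρ * a * b + r * b ^ 2) := by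
  linarith [sq_nonneg (q * a - ρ * b), sq_nonneg (r * b - ρ * a)]

lemma norm_le_one_add_sq_add_sq (p : ℝ × ℝ) : ‖p‖ ≤ 1 + (p.1 ^ 2 + p.2 ^ 2) := by
  refine max_le ?_ ?_ <;> rw [Real.norm_eq_abs, abs_le] <;> constructor <;> nlinarith

lemma norm_le_const_add_covariance_form (h : (!![r, ρ; ρ, q]).PosDef) (p : ℝ × ℝ) :
    1 / (2 * (r + q)) * ‖p‖ ≤ 1 / (2 * (r + q)) +
      (q * p.1 ^ 2 - 2 * ρ * p.1 * p.2 + r * p.2 ^ 2) / (2 * (r * q - ρ ^ 2)) := by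
  obtain ⟨hr, hq, hD⟩ := covariance_pos h
  have hcoercive : 1 / (2 * (r + q)) * (p.1 ^ 2 + p.2 ^ 2) ≤
      (q * p.1 ^ 2 - 2 * ρ * p.1 * p.2 + r * p.2 ^ 2) / (2 * (r * q - ρ ^ 2)) := by
    rw [div_mul_eq_mul_div, div_le_div_iff₀ (by positivity) (by positivity)]
    linarith [det_mul_sq_add_sq_le r ρ q p.1 p.2]
  calc _ ≤ 1 / (2 * (r + q)) * (1 + (p.1 ^ 2 + p.2 ^ 2)) := by
        gcongr
        exact norm_le_one_add_sq_add_sq p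
    _ ≤ _ := by linarith

lemma hasTemperateGrowth_covariance_form (r ρ q : ℝ) :
    Function.HasTemperateGrowth fun p : ℝ × ℝ =>
      (q * p.1 ^ 2 - 2 * ρ * p.1 * p.2 + r * p.2 ^ 2) / (2 * (r * q - ρ ^ 2)) := by
  have hfst : Function.HasTemperateGrowth fun p : ℝ × ℝ => p.1 :=
    (ContinuousLinearMap.fst ℝ ℝ ℝ).hasTemperateGrowth
  have hsnd : Function.HasTemperateGrowth fun p : ℝ × ℝ => p.2 :=
    (ContinuousLinearMap.snd ℝ ℝ ℝ).hasTemperateGrowth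
  simp only [div_eq_mul_inv]
  fun_prop

/-- The centered bivariate Gaussian density `gauss2` as a Schwartz function on the plane. -/
noncomputable def gaussianKernel (h : (!![r, ρ; ρ, q]).PosDef) : 𝓢(ℝ × ℝ, ℝ) :=
  (2 * π * √(r * q - ρ ^ 2))⁻¹ • schwartzExpNeg
    (fun p => (q * p.1 ^ 2 - 2 * ρ * p.1 * p.2 + r * p.2 ^ 2) / (2 * (r * q - ρ ^ 2)))
    (hasTemperateGrowth_covariance_form r ρ q)
    (by obtain ⟨hr, hq, -⟩ := covariance_pos h; positivity)
    (norm_le_const_add_covariance_form h)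

lemma gaussianKernel_apply (h : (!![r, ρ; ρ, q]).PosDef) (p : ℝ × ℝ) :
    gaussianKernel h p = gauss2 p.1 p.2 r ρ q := by
  rw [gauss2, neg_div]
  rfl

lemma gauss2_eq_marginal_mul_conditional (h : (!![r, ρ; ρ, q]).PosDef) (a b : ℝ) :
    gauss2 a b r ρ q = gaussianPDFReal 0 r.toNNReal a *
      gaussianPDFReal (ρ / r * a) ((r * q - ρ ^ 2) / r).toNNReal b := by
  obtain ⟨hr, -, hD⟩ := covariance_pos h
  have hnorm : √(2 * π * r) * √(2 * π * ((r * q - ρ ^ 2) / r)) =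
      2 * π * √(r * q - ρ ^ 2) := by
    rw [← Real.sqrt_mul (by positivity),
      show 2 * π * r * (2 * π * ((r * q - ρ ^ 2) / r)) = (2 * π) ^ 2 * (r * q - ρ ^ 2) by
        field_simp,
      Real.sqrt_mul (by positivity), Real.sqrt_sq (by positivity)]
  have hexp : -(q * a ^ 2 - 2 * ρ * a * b + r * b ^ 2) / (2 * (r * q - ρ ^ 2)) =
      -(a - 0) ^ 2 / (2 * r) + -(b - ρ / r * a) ^ 2 / (2 * ((r * q - ρ ^ 2) / r)) := by
    rw [div_add_div _ _ (by positivity) (by positivity),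
      div_eq_div_iff (by positivity) (by positivity)]
    field_simp
    ring
  rw [gauss2, gaussianPDFReal, gaussianPDFReal, Real.coe_toNNReal _ hr.le,
    Real.coe_toNNReal _ (by positivity), hexp, Real.exp_add, ← hnorm, mul_inv]
  ring

lemma integral_gaussianKernel (h : (!![r, ρ; ρ, q]).PosDef) : ∫ p, gaussianKernel h p = 1 := by
  obtain ⟨hr, -, hD⟩ := covariance_pos h
  have hr' : r.toNNReal ≠ 0 := by simpa using hr
  have hs' : ((r * q - ρ ^ 2) / r).toNNReal ≠ 0 := by
    simpa only [ne_eq, Real.toNNReal_eq_zero, not_le] using div_pos hD hr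
  rw [Measure.volume_eq_prod, integral_prod _ (gaussianKernel h).integrable]
  simp only [gaussianKernel_apply, gauss2_eq_marginal_mul_conditional h, integral_const_mul,
    integral_gaussianPDFReal_eq_one _ hs', mul_one, integral_gaussianPDFReal_eq_one _ hr']

end GaussianKernel

section Continuity

variable {α σ γ ystar : ℝ → ℝ}

lemma continuous_phiR (hα : Continuous α) : Continuous fun p : ℝ × ℝ => phiR α p.1 p.2 := by
  have hint : ∀ a b, IntervalIntegrable α volume a b := hα.intervalIntegrable
  have hprim : Continuous fun x => ∫ u in (0 : ℝ)..x, α u :=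
    intervalIntegral.continuous_primitive hint 0
  have heq : (fun p : ℝ × ℝ => phiR α p.1 p.2) = fun p : ℝ × ℝ =>
      Real.exp (-((∫ u in (0 : ℝ)..p.2, α u) - ∫ u in (0 : ℝ)..p.1, α u)) := by
    ext p
    rw [intervalIntegral.integral_interval_sub_left (hint _ _) (hint _ _), phiR]
  rw [heq]
  exact Real.continuous_exp.comp
    ((hprim.comp continuous_snd).sub (hprim.comp continuous_fst)).neg

lemma continuous_phiR_right_s8 (hα : Continuous α) (t : ℝ) : Continuous (phiR α t) :=
  (continuous_phiR hα).comp (Continuous.prodMk_right t)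

lemma continuous_Srr (hα : Continuous α) (hσ : Continuous σ) (t : ℝ) :
    Continuous (Srr α σ t) := by
  have hφ : Continuous fun p : ℝ × ℝ => phiR α p.2 p.1 :=
    (continuous_phiR hα).comp continuous_swap
  exact intervalIntegral.continuous_parametric_intervalIntegral_of_continuous
    (f := fun v u => (phiR α u v) ^ 2 * (σ u) ^ 2)
    (by unfold Function.uncurry; fun_prop) continuous_id

lemma continuous_psiR (hα : Continuous α) (hσ : Continuous σ) (hγ : Continuous γ) (t : ℝ) :
    Continuous (psiR α σ γ t) := by
  have hr := continuous_Srr hα hσ t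
  unfold psiR
  fun_prop

lemma continuous_Srz (hα : Continuous α) (hσ : Continuous σ) (hγ : Continuous γ) (t : ℝ) :
    Continuous (Srz α σ γ t) := by
  have hφ : Continuous fun p : ℝ × ℝ => phiR α p.2 p.1 :=
    (continuous_phiR hα).comp continuous_swap
  have hr := continuous_Srr hα hσ t
  have hψ := continuous_psiR hα hσ hγ t
  exact intervalIntegral.continuous_parametric_intervalIntegral_of_continuous
    (f := fun v u => psiR α σ γ t u * phiR α u v * Srr α σ t u)
    (by unfold Function.uncurry; fun_prop) continuous_id

lemma continuous_Bstar (hα : Continuous α) (hσ : Continuous σ) (hγ : Continuous γ) (t : ℝ) :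
    Continuous (Bstar α σ γ t) := by
  have hφ := continuous_phiR_right_s8 hα t
  have hψ := continuous_psiR hα hσ hγ t
  exact intervalIntegral.continuous_primitive
    (fun a b => Continuous.intervalIntegrable (by fun_prop) a b) t

lemma continuous_dY (hα : Continuous α) (hσ : Continuous σ) (hγ : Continuous γ) (t : ℝ) :
    Continuous (dY α σ γ t) :=
  (hγ.mul (continuous_Srr hα hσ t)).div (continuous_phiR_right_s8 hα t)
    fun _ => (Real.exp_pos _).ne'

lemma continuous_dZ (hα : Continuous α) (hσ : Continuous σ) (hγ : Continuous γ) (t : ℝ) :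
    Continuous (dZ α σ γ t) :=
  (hγ.mul (continuous_Srz hα hσ hγ t)).sub
    ((continuous_Bstar hα hσ hγ t).mul (continuous_dY hα hσ hγ t))

lemma continuousOn_Rplus (hα : Continuous α) (hσ : Continuous σ) (hγ : Continuous γ)
    (hys : Continuous ystar) (y t : ℝ) {S : Set ℝ} (hne : ∀ u ∈ S, γ u ≠ 0) :
    ContinuousOn (Rplus α σ γ ystar y t) S := by
  have hφ := continuous_phiR_right_s8 hα t
  have hr := continuous_Srr hα hσ t
  exact ContinuousOn.div (by fun_prop) (by fun_prop) fun u hu =>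
    mul_ne_zero two_ne_zero (hne u hu)

lemma continuousOn_Rminus (hα : Continuous α) (hσ : Continuous σ) (hγ : Continuous γ)
    (hys : Continuous ystar) (y t : ℝ) {S : Set ℝ} (hne : ∀ u ∈ S, γ u ≠ 0) :
    ContinuousOn (Rminus α σ γ ystar y t) S := by
  have hφ := continuous_phiR_right_s8 hα t
  have hr := continuous_Srr hα hσ t
  exact ContinuousOn.div (by fun_prop) (by fun_prop) fun u hu =>
    mul_ne_zero two_ne_zero (hne u hu)

end Continuity

section GreenFunction

/-- The mean of `(η, ζ)` under the leading-order Green's function `G0` started at `(y, z)`. -/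
noncomputable def greenMean (α σ γ : ℝ → ℝ) (y z t v : ℝ) : ℝ × ℝ :=
  (phiR α t v * y, z + muStar α σ γ y t v)

/-- The covariance matrix of `(η, ζ)` under the leading-order Green's function `G0`. -/
noncomputable abbrev greenCovariance (α σ γ : ℝ → ℝ) (t v : ℝ) : Matrix (Fin 2) (Fin 2) ℝ :=
  !![Srr α σ t v, Srz α σ γ t v; Srz α σ γ t v, Szz α σ γ t v]

variable {α σ γ : ℝ → ℝ} {t v : ℝ}

lemma hasDerivAt_greenMean_right (α σ γ : ℝ → ℝ) (y z t v : ℝ) :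
    HasDerivAt (fun z' => greenMean α σ γ y z' t v) (0, 1) z :=
  (hasDerivAt_const z _).prodMk ((hasDerivAt_id z).add_const _)

lemma hasDerivAt_greenMean_left (α σ γ : ℝ → ℝ) (y z t v : ℝ) :
    HasDerivAt (fun y' => greenMean α σ γ y' z t v) (phiR α t v, Bstar α σ γ t v) y := by
  have hμ : HasDerivAt (fun y' => muStar α σ γ y' t v) (Bstar α σ γ t v) y := by
    unfold muStar
    simpa only [mul_one, id] using (((hasDerivAt_id y).add_const (Srz α σ γ 0 t)).const_mul
      (Bstar α σ γ t v)).add_const ((1 / 2) * (Bstar α σ γ t v) ^ 2 * Srr α σ 0 t)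
  exact (by simpa using (hasDerivAt_id y).const_mul (phiR α t v) :
    HasDerivAt (fun y' => phiR α t v * y') _ y).prodMk (hμ.const_add z)

lemma continuous_greenMean_comp (α σ γ : ℝ → ℝ) (t v : ℝ) {Y Z : ℝ → ℝ} (hY : Continuous Y)
    (hZ : Continuous Z) : Continuous fun u => greenMean α σ γ (Y u) (Z u) t v := by
  unfold greenMean muStar
  fun_prop

lemma deriv_schwartz_sub_comp {E : Type*} [NormedAddCommGroup E] [NormedSpace ℝ E]
    (f : 𝓢(E, ℝ)) {n : ℝ → E} {w : E} {s : ℝ} (hn : HasDerivAt n w s) (x : E) :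
    deriv (fun s' => f (x - n s')) s = -(∂_{w} f) (x - n s) := by
  rw [SchwartzMap.lineDerivOp_apply_eq_fderiv, ← map_neg]
  exact (f.differentiableAt.hasFDerivAt.comp_hasDerivAt s (hn.const_sub x)).deriv

lemma G0_eq (h : (greenCovariance α σ γ t v).PosDef)
    (y z η ζ : ℝ) :
    G0 α σ γ y z t η ζ v = gaussianKernel h ((η, ζ) - greenMean α σ γ y z t v) := by
  rw [gaussianKernel_apply, G0, sub_sub]
  rfl

lemma dzG0_eq (h : (greenCovariance α σ γ t v).PosDef)
    (y z η ζ : ℝ) :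
    dzG0 α σ γ y z t η ζ v =
      -(∂_{((0, 1) : ℝ × ℝ)} (gaussianKernel h)) ((η, ζ) - greenMean α σ γ y z t v) := by
  simp only [dzG0, G0_eq h]
  exact deriv_schwartz_sub_comp _ (hasDerivAt_greenMean_right α σ γ y z t v) _

lemma dzzG0_eq (h : (greenCovariance α σ γ t v).PosDef)
    (y z η ζ : ℝ) :
    dzzG0 α σ γ y z t η ζ v =
      (∂_{((0, 1) : ℝ × ℝ)} (∂_{((0, 1) : ℝ × ℝ)} (gaussianKernel h)))
        ((η, ζ) - greenMean α σ γ y z t v) := by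
  simp only [dzzG0, dzG0_eq h, deriv.fun_neg]
  rw [deriv_schwartz_sub_comp _ (hasDerivAt_greenMean_right α σ γ y z t v), neg_neg]

/-- Differentiating the mean in `y` moves it along `(φ, B*)`; subtracting `B* ∂_z²` removes the
second component of that direction. -/
lemma dydzG0_sub_eq (h : (greenCovariance α σ γ t v).PosDef)
    (y z η ζ : ℝ) :
    dydzG0 α σ γ y z t η ζ v - Bstar α σ γ t v * dzzG0 α σ γ y z t η ζ v =
      phiR α t v * (∂_{((1, 0) : ℝ × ℝ)} (∂_{((0, 1) : ℝ × ℝ)} (gaussianKernel h)))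
        ((η, ζ) - greenMean α σ γ y z t v) := by
  have hdir : (phiR α t v, Bstar α σ γ t v) =
      phiR α t v • ((1, 0) : ℝ × ℝ) + Bstar α σ γ t v • ((0, 1) : ℝ × ℝ) := by simp
  rw [dzzG0_eq h]
  simp only [dydzG0, dzG0_eq h, deriv.fun_neg]
  rw [deriv_schwartz_sub_comp _ (hasDerivAt_greenMean_left α σ γ y z t v), neg_neg, hdir,
    LineDeriv.lineDerivOp_left_add, LineDeriv.lineDerivOp_left_smul,
    LineDeriv.lineDerivOp_left_smul]
  simp

end GreenFunction

section Correction

variable {α σ γ ystar R1star : ℝ → ℝ} {t v : ℝ}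

lemma hasDipoleMoment_neg_lineDerivOp_gaussianKernel {r ρ q : ℝ}
    (h : (!![r, ρ; ρ, q]).PosDef) :
    HasDipoleMoment volume (ContinuousLinearMap.snd ℝ ℝ ℝ)
      (fun p => -(∂_{((0, 1) : ℝ × ℝ)} (gaussianKernel h)) p) 1 := by
  simpa [integral_gaussianKernel h] using
    (hasDipoleMoment_lineDerivOp (μ := volume) (ContinuousLinearMap.snd ℝ ℝ ℝ)
      (gaussianKernel h) (0, 1)).neg

lemma hasDipoleMoment_dzG0
    (h : (greenCovariance α σ γ t v).PosDef) (y z : ℝ) :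
    HasDipoleMoment volume (ContinuousLinearMap.snd ℝ ℝ ℝ)
      (fun p => dzG0 α σ γ y z t p.1 p.2 v) 1 := by
  simpa only [dzG0_eq h] using
    (hasDipoleMoment_neg_lineDerivOp_gaussianKernel h).comp_sub_right (greenMean α σ γ y z t v)

lemma hasDipoleMoment_intervalIntegral_mul_dzG0
    (h : (greenCovariance α σ γ t v).PosDef)
    {A Y Z : ℝ → ℝ} {a b : ℝ} (hA : IntervalIntegrable A volume a b) (hY : Continuous Y)
    (hZ : Continuous Z) :
    HasDipoleMoment volume (ContinuousLinearMap.snd ℝ ℝ ℝ)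
      (fun p => ∫ u in a..b, A u * dzG0 α σ γ (Y u) (Z u) t p.1 p.2 v) (∫ u in a..b, A u) := by
  simpa only [dzG0_eq h, mul_one] using
    (hasDipoleMoment_neg_lineDerivOp_gaussianKernel h).intervalIntegral_mul_comp_sub hA
      (continuous_greenMean_comp α σ γ t v hY hZ)

lemma hasDipoleMoment_dzzG0
    (h : (greenCovariance α σ γ t v).PosDef) (y z : ℝ) :
    HasDipoleMoment volume (ContinuousLinearMap.snd ℝ ℝ ℝ)
      (fun p => dzzG0 α σ γ y z t p.1 p.2 v) 0 := by
  simpa only [dzzG0_eq h] using (hasDipoleMoment_lineDerivOp_lineDerivOp (μ := volume)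
    (ContinuousLinearMap.snd ℝ ℝ ℝ) (gaussianKernel h) (0, 1) (0, 1)).comp_sub_right
      (greenMean α σ γ y z t v)

lemma hasDipoleMoment_dydzG0_sub
    (h : (greenCovariance α σ γ t v).PosDef) (y z : ℝ) :
    HasDipoleMoment volume (ContinuousLinearMap.snd ℝ ℝ ℝ)
      (fun p => dydzG0 α σ γ y z t p.1 p.2 v -
        Bstar α σ γ t v * dzzG0 α σ γ y z t p.1 p.2 v) 0 := by
  simpa only [dydzG0_sub_eq h, mul_zero] using
    ((hasDipoleMoment_lineDerivOp_lineDerivOp (μ := volume) (ContinuousLinearMap.snd ℝ ℝ ℝ)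
      (gaussianKernel h) (1, 0) (0, 1)).comp_sub_right
        (greenMean α σ γ y z t v)).const_mul (phiR α t v)

lemma intervalIntegrable_mul_dzG0
    (h : (greenCovariance α σ γ t v).PosDef)
    {A Y Z : ℝ → ℝ} {a b : ℝ} (hA : IntervalIntegrable A volume a b) (hY : Continuous Y)
    (hZ : Continuous Z) (η ζ : ℝ) :
    IntervalIntegrable (fun u => A u * dzG0 α σ γ (Y u) (Z u) t η ζ v) volume a b := by
  simp only [dzG0_eq h]
  refine hA.mul_continuousOn (Continuous.continuousOn ?_)
  exact ((∂_{((0, 1) : ℝ × ℝ)} (gaussianKernel h)).continuous.comp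
    (continuous_const.sub (continuous_greenMean_comp α σ γ t v hY hZ))).neg

lemma hasDipoleMoment_intervalIntegral_sub_add_mul_dzG0
    (h : (greenCovariance α σ γ t v).PosDef)
    {A₁ A₂ A₃ Y₁ Y₂ Y₃ Z₁ Z₂ Z₃ : ℝ → ℝ} {a b : ℝ}
    (hA₁ : IntervalIntegrable A₁ volume a b) (hA₂ : IntervalIntegrable A₂ volume a b)
    (hA₃ : IntervalIntegrable A₃ volume a b) (hY₁ : Continuous Y₁) (hY₂ : Continuous Y₂)
    (hY₃ : Continuous Y₃) (hZ₁ : Continuous Z₁) (hZ₂ : Continuous Z₂) (hZ₃ : Continuous Z₃) :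
    HasDipoleMoment volume (ContinuousLinearMap.snd ℝ ℝ ℝ)
      (fun p => ∫ u in a..b,
        (A₁ u * dzG0 α σ γ (Y₁ u) (Z₁ u) t p.1 p.2 v
          - A₂ u * dzG0 α σ γ (Y₂ u) (Z₂ u) t p.1 p.2 v
          + A₃ u * dzG0 α σ γ (Y₃ u) (Z₃ u) t p.1 p.2 v))
      (∫ u in a..b, (A₁ u - A₂ u + A₃ u)) := by
  have hsplit (η ζ : ℝ) : ∫ u in a..b,
      (A₁ u * dzG0 α σ γ (Y₁ u) (Z₁ u) t η ζ v - A₂ u * dzG0 α σ γ (Y₂ u) (Z₂ u) t η ζ v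
        + A₃ u * dzG0 α σ γ (Y₃ u) (Z₃ u) t η ζ v) =
      (∫ u in a..b, A₁ u * dzG0 α σ γ (Y₁ u) (Z₁ u) t η ζ v)
        - (∫ u in a..b, A₂ u * dzG0 α σ γ (Y₂ u) (Z₂ u) t η ζ v)
        + ∫ u in a..b, A₃ u * dzG0 α σ γ (Y₃ u) (Z₃ u) t η ζ v := by
    have h₁ := intervalIntegrable_mul_dzG0 h hA₁ hY₁ hZ₁ η ζ
    have h₂ := intervalIntegrable_mul_dzG0 h hA₂ hY₂ hZ₂ η ζ
    have h₃ := intervalIntegrable_mul_dzG0 h hA₃ hY₃ hZ₃ η ζ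
    rw [intervalIntegral.integral_add (h₁.sub h₂) h₃, intervalIntegral.integral_sub h₁ h₂]
  rw [intervalIntegral.integral_add (hA₁.sub hA₂) hA₃, intervalIntegral.integral_sub hA₁ hA₂]
  simp only [hsplit]
  exact ((hasDipoleMoment_intervalIntegral_mul_dzG0 h hA₁ hY₁ hZ₁).sub
    (hasDipoleMoment_intervalIntegral_mul_dzG0 h hA₂ hY₂ hZ₂)).add
    (hasDipoleMoment_intervalIntegral_mul_dzG0 h hA₃ hY₃ hZ₃)

lemma hasDipoleMoment_G1 (hα : Continuous α) (hσ : Continuous σ) (hγ : Continuous γ)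
    (hys : Continuous ystar) (hR1 : IntervalIntegrable R1star volume t v)
    (h : (greenCovariance α σ γ t v).PosDef)
    (hne : ∀ u ∈ Set.uIcc t v, γ u ≠ 0) (y z : ℝ) :
    HasDipoleMoment volume (ContinuousLinearMap.snd ℝ ℝ ℝ)
      (fun p => G1 α σ γ ystar R1star y z t p.1 p.2 v)
      ((∫ u in t..v, (Rplus α σ γ ystar y t u - Rminus α σ γ ystar y t u + R1star u)) -
        muStar α σ γ y t v) := by
  have hdY := continuous_dY hα hσ hγ t
  have hdZ := continuous_dZ hα hσ hγ t
  have hsuperposition := hasDipoleMoment_intervalIntegral_sub_add_mul_dzG0 h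
    (Y₁ := fun u => y + dY α σ γ t u) (Y₂ := fun u => y - dY α σ γ t u) (Y₃ := fun _ => y)
    (Z₁ := fun u => z + dZ α σ γ t u) (Z₂ := fun u => z - dZ α σ γ t u) (Z₃ := fun _ => z)
    (continuousOn_Rplus hα hσ hγ hys y t hne).intervalIntegrable
    (continuousOn_Rminus hα hσ hγ hys y t hne).intervalIntegrable hR1
    (by fun_prop) (by fun_prop) (by fun_prop) (by fun_prop) (by fun_prop) (by fun_prop)
  have hdrift := (hasDipoleMoment_dzG0 h y z).const_mul (muStar α σ γ y t v)
  have hmixed := (hasDipoleMoment_dydzG0_sub h y z).const_mul (Srz α σ γ t v / phiR α t v)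
  have hdiffusion := (hasDipoleMoment_dzzG0 h y z).const_mul (Szz α σ γ t v)
  simpa only [G1, mul_one, mul_zero, sub_zero] using
    ((hsuperposition.sub hdrift).sub hmixed).sub hdiffusion

end Correction

theorem sofr_1M_first_order_at_T1_general (α σ γ ystar R1star : ℝ → ℝ)
    (hα : Continuous α) (hσc : Continuous σ) (hγc : Continuous γ) (hys : Continuous ystar)
    (T₁ T₂ y z c : ℝ) (hR1 : IntervalIntegrable R1star volume T₁ T₂)
    (hPD : (!![Srr α σ T₁ T₂, Srz α σ γ T₁ T₂;
               Srz α σ γ T₁ T₂, Szz α σ γ T₁ T₂]).PosDef)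
    (hγ : ∀ u ∈ Set.uIcc T₁ T₂, γ u ≠ 0) :
    Integrable (fun p : ℝ × ℝ => (p.2 - c) * G1 α σ γ ystar R1star y z T₁ p.1 p.2 T₂) ∧
      ∫ p : ℝ × ℝ, (p.2 - c) * G1 α σ γ ystar R1star y z T₁ p.1 p.2 T₂ =
        (∫ t₁ in T₁..T₂,
            (Rplus α σ γ ystar y T₁ t₁ - Rminus α σ γ ystar y T₁ t₁ + R1star t₁)) -
          muStar α σ γ y T₁ T₂ :=
  have hG1 := hasDipoleMoment_G1 hα hσc hγc hys hR1 hPD hγ y z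
  ⟨hG1.integrable_sub_const_mul c, hG1.integral_sub_const_mul c⟩

theorem sofr_1M_first_order_at_T1 (α σ γ ystar R1star : ℝ → ℝ)
    (hα : Continuous α) (hσc : Continuous σ) (hγc : Continuous γ)
    (hys : Continuous ystar) (hR1 : Continuous R1star)
    (T₁ T₂ y z : ℝ) (h12 : T₁ < T₂)
    (hPD : (!![Srr α σ T₁ T₂, Srz α σ γ T₁ T₂;
               Srz α σ γ T₁ T₂, Szz α σ γ T₁ T₂]).PosDef)
    (hγ : ∀ u ∈ Set.Icc T₁ T₂, 0 < γ u) :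
    (∫ η : ℝ, ∫ ζ : ℝ, (ζ - z) * G1 α σ γ ystar R1star y z T₁ η ζ T₂)
      = (∫ t₁ in T₁..T₂,
            (Rplus α σ γ ystar y T₁ t₁ - Rminus α σ γ ystar y T₁ t₁ + R1star t₁))
          - muStar α σ γ y T₁ T₂ := by
  obtain ⟨hint, hval⟩ := sofr_1M_first_order_at_T1_general α σ γ ystar R1star hα hσc hγc hys
    T₁ T₂ y z z (hR1.intervalIntegrable T₁ T₂) hPD fun u hu =>
      (hγ u (Set.uIcc_of_le h12.le ▸ hu)).ne'
  rw [← hval, Measure.volume_eq_prod, integral_prod _ hint]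
end

section
/- Fix v ∈ ℝ and (η,ζ) ∈ ℝ². Assume σ(u) > 0 for all u. Then for all t < v and all (y,z) ∈ ℝ², the Hull–White futures kernel Ĝ(y,z,t) := N₂( η − φ_r(t,v)·y, ζ − z − B(t,v)·y ; S(t,v) ) is differentiable in t, twice differentiable in y, differentiable in z, and satisfies the backward Kolmogorov equation for the futures pricing problem without discounting: ∂_t Ĝ − α(t)·y·∂_y Ĝ + y·∂_z Ĝ + (1/2)σ(t)²·∂_y² Ĝ = 0. -/
open MeasureTheory Real

/-- The Hull–White (γ ≡ 0) futures Green's function, as a function of the backward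
variables `(y, z, t)` for fixed `(v, η, ζ)`. -/
noncomputable def GhatHW (α σ : ℝ → ℝ) (v η ζ : ℝ) (y z t : ℝ) : ℝ :=
  gauss2 (η - phiR α t v * y) (ζ - z - Bstar α σ (fun _ => 0) t v * y)
    (Srr α σ t v) (Srz α σ (fun _ => 0) t v) (Szz α σ (fun _ => 0) t v)

open Set Function
open scoped Topology

/-!
Exchanging the order of integration over the triangle `t ≤ w ≤ u ≤ v` gives
`S(t,v) = ∫_t^v σ(u)² (φ_r(u,v), B(u,v)) (φ_r(u,v), B(u,v))ᵀ du`.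
Hence `∂_t S(t,v)` is minus the integrand at `t`, and `S(t,v)` is positive definite because
`p φ_r(·,v) + q B(·,v)` has only isolated zeros. Since `∂_t φ_r = α φ_r` and `∂_t B = α B - 1`, the
motion of the mean cancels the transport terms of the equation. The motion of `S(t,v)` cancels the
diffusion term by the heat equations `∂_srr N₂ = ½ ∂ₐₐ N₂`, `∂_srz N₂ = ∂ₐ∂_b N₂`,
`∂_szz N₂ = ½ ∂_bb N₂`.
-/

section IntervalIntegral

variable {E : Type*} [NormedAddCommGroup E] [NormedSpace ℝ E]

lemma hasDerivAt_integral_left_of_continuous [CompleteSpace E] {f : ℝ → E} (hf : Continuous f)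
    (a b : ℝ) : HasDerivAt (fun s => ∫ x in s..b, f x) (-f a) a :=
  intervalIntegral.integral_hasDerivAt_left (hf.intervalIntegrable a b)
    hf.aestronglyMeasurable.stronglyMeasurableAtFilter hf.continuousAt

lemma continuous_integral_comp_endpoints {X : Type*} [TopologicalSpace X] {f : ℝ → E}
    (hf : Continuous f) {a b : X → ℝ} (ha : Continuous a) (hb : Continuous b) :
    Continuous fun x => ∫ s in a x..b x, f s := by
  have hprim : Continuous fun u => ∫ s in 0..u, f s :=
    intervalIntegral.continuous_primitive hf.intervalIntegrable 0
  refine ((hprim.comp hb).sub (hprim.comp ha)).congr fun x => ?_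
  exact intervalIntegral.integral_interval_sub_left (hf.intervalIntegrable _ _)
    (hf.intervalIntegrable _ _)

lemma integral_integral_triangle_swap_of_le {f : ℝ → ℝ → E} {a b : ℝ} (hab : a ≤ b)
    (hf : IntegrableOn (uncurry f) (Ioc a b ×ˢ Ioc a b)) :
    ∫ u in a..b, ∫ w in a..u, f w u = ∫ w in a..b, ∫ u in w..b, f w u := by
  have hT : MeasurableSet {p : ℝ × ℝ | p.1 ≤ p.2} := measurableSet_le measurable_fst measurable_snd
  let g : ℝ → ℝ → E := curry ({p : ℝ × ℝ | p.1 ≤ p.2}.indicator (uncurry f))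
  have hleft : ∀ u ∈ uIcc a b, ∫ w in a..u, f w u = ∫ w in a..b, g w u := fun u hu => by
    rw [uIcc_of_le hab] at hu
    have hg : (g · u) = (Iic u).indicator (f · u) := rfl
    rw [hg, intervalIntegral.integral_of_le hu.1, intervalIntegral.integral_of_le hab,
      setIntegral_indicator measurableSet_Iic, Ioc_inter_Iic, min_eq_right hu.2]
  have hright : ∀ w ∈ uIcc a b, ∫ u in w..b, f w u = ∫ u in a..b, g w u := fun w hw => by
    rw [uIcc_of_le hab] at hw
    have hae : (Ioi w).indicator (f w) =ᵐ[volume] g w :=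
      indicator_ae_eq_of_ae_eq_set Ioi_ae_eq_Ici
    rw [intervalIntegral.integral_of_le hw.2, intervalIntegral.integral_of_le hab,
      ← integral_congr_ae (ae_restrict_of_ae hae), setIntegral_indicator measurableSet_Ioi,
      Ioc_inter_Ioi, max_eq_right hw.1]
  rw [intervalIntegral.integral_congr hleft, intervalIntegral.integral_congr hright]
  refine (intervalIntegral_intervalIntegral_swap ?_).symm
  rw [uIoc_of_le hab]
  exact hf.indicator hT

lemma integral_integral_triangle_swap {f : ℝ → ℝ → E} {a b : ℝ}
    (hf : IntegrableOn (uncurry f) (uIoc a b ×ˢ uIoc a b)) :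
    ∫ u in a..b, ∫ w in a..u, f w u = ∫ w in a..b, ∫ u in w..b, f w u := by
  rcases le_total a b with hab | hba
  · rw [uIoc_of_le hab] at hf
    exact integral_integral_triangle_swap_of_le hab hf
  · rw [uIoc_of_ge hba] at hf
    have hswap := integral_integral_triangle_swap_of_le (f := fun u w => f w u) hba hf.swap
    rw [intervalIntegral.integral_symm b a, intervalIntegral.integral_symm b a]
    simp only [intervalIntegral.integral_symm _ a, intervalIntegral.integral_symm b _,
      intervalIntegral.integral_neg, hswap]

lemma integral_integral_triangle_swap_of_continuous {f : ℝ → ℝ → E} (hf : Continuous (uncurry f))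
    (a b : ℝ) : ∫ u in a..b, ∫ w in a..u, f w u = ∫ w in a..b, ∫ u in w..b, f w u :=
  integral_integral_triangle_swap <|
    (hf.continuousOn.integrableOn_compact (isCompact_uIcc.prod isCompact_uIcc)).mono_set <|
      prod_mono uIoc_subset_uIcc uIoc_subset_uIcc

end IntervalIntegral

section Gaussian

/-- First component of the score `∇ log N₂(·; S) = -S⁻¹(a, b)` of the bivariate Gaussian density;
the arguments are those of `gauss2`. -/
noncomputable def gauss2ScoreFst (a b srr srz szz : ℝ) : ℝ :=
  (srz * b - szz * a) / (srr * szz - srz ^ 2)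

/-- Second component of the score `∇ log N₂(·; S) = -S⁻¹(a, b)` of the bivariate Gaussian density;
the arguments are those of `gauss2`. -/
noncomputable def gauss2ScoreSnd (a b srr srz szz : ℝ) : ℝ :=
  (srz * a - srr * b) / (srr * szz - srz ^ 2)

variable {a b x c w : ℝ → ℝ} {a' b' x' c' w' s : ℝ}

lemma hasDerivAt_inv_const_mul_sqrt {D : ℝ → ℝ} {D' k : ℝ} (hk : k ≠ 0)
    (hD : HasDerivAt D D' s) (hpos : 0 < D s) :
    HasDerivAt (fun r => (k * √(D r))⁻¹) ((k * √(D s))⁻¹ * (-D' / (2 * D s))) s := by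
  have hsqrt : √(D s) ≠ 0 := (sqrt_pos.2 hpos).ne'
  refine (((hD.sqrt hpos.ne').const_mul k).inv (mul_ne_zero hk hsqrt)).congr_deriv ?_
  field_simp
  rw [sq_sqrt hpos.le]

/-- The coefficients of `x'`, `c'`, `w'` are `½ ∂ₐₐ N₂`, `∂ₐ∂_b N₂`, `½ ∂_bb N₂` divided by `N₂`,
i.e. the heat equations satisfied by `N₂`. -/
lemma hasDerivAt_gauss2 (ha : HasDerivAt a a' s) (hb : HasDerivAt b b' s) (hx : HasDerivAt x x' s)
    (hc : HasDerivAt c c' s) (hw : HasDerivAt w w' s) (hD : 0 < x s * w s - c s ^ 2) :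
    let D := x s * w s - c s ^ 2
    let p := gauss2ScoreFst (a s) (b s) (x s) (c s) (w s)
    let q := gauss2ScoreSnd (a s) (b s) (x s) (c s) (w s)
    HasDerivAt (fun r => gauss2 (a r) (b r) (x r) (c r) (w r))
      (gauss2 (a s) (b s) (x s) (c s) (w s) *
        (p * a' + q * b' + x' * (p ^ 2 - w s / D) / 2 + c' * (p * q + c s / D)
          + w' * (q ^ 2 - x s / D) / 2)) s := by
  intro D p q
  have hdet := (hx.fun_mul hw).fun_sub (hc.fun_pow 2)
  have hnum := (((hw.fun_mul (ha.fun_pow 2)).fun_sub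
    (((hc.const_mul 2).fun_mul ha).fun_mul hb)).fun_add (hx.fun_mul (hb.fun_pow 2))).fun_neg
  have hpre := hasDerivAt_inv_const_mul_sqrt (mul_ne_zero two_ne_zero pi_ne_zero) hdet hD
  have hexp := (hnum.fun_div (hdet.const_mul 2) (mul_pos two_pos hD).ne').exp
  refine (hpre.fun_mul hexp).congr_deriv ?_
  simp only [p, q, D, gauss2, gauss2ScoreFst, gauss2ScoreSnd]
  have hD' := hD.ne'
  generalize rexp _ = E
  generalize (2 * π * √(x s * w s - c s ^ 2))⁻¹ = k
  generalize hd : x s * w s - c s ^ 2 = d at *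
  field_simp
  rw [← hd]
  ring

variable {x₀ c₀ w₀ : ℝ}

lemma hasDerivAt_gauss2_of_const_cov (ha : HasDerivAt a a' s) (hb : HasDerivAt b b' s)
    (hD : 0 < x₀ * w₀ - c₀ ^ 2) :
    HasDerivAt (fun r => gauss2 (a r) (b r) x₀ c₀ w₀)
      (gauss2 (a s) (b s) x₀ c₀ w₀ * (gauss2ScoreFst (a s) (b s) x₀ c₀ w₀ * a' +
        gauss2ScoreSnd (a s) (b s) x₀ c₀ w₀ * b')) s :=
  (hasDerivAt_gauss2 ha hb (hasDerivAt_const s x₀) (hasDerivAt_const s c₀) (hasDerivAt_const s w₀)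
    hD).congr_deriv (by ring)

lemma hasDerivAt_gauss2_line (hD : 0 < x₀ * w₀ - c₀ ^ 2) (a₀ b₀ k l y : ℝ) :
    HasDerivAt (fun r => gauss2 (a₀ - k * r) (b₀ - l * r) x₀ c₀ w₀)
      (-(gauss2 (a₀ - k * y) (b₀ - l * y) x₀ c₀ w₀ *
        (k * gauss2ScoreFst (a₀ - k * y) (b₀ - l * y) x₀ c₀ w₀ +
          l * gauss2ScoreSnd (a₀ - k * y) (b₀ - l * y) x₀ c₀ w₀))) y :=
  (hasDerivAt_gauss2_of_const_cov (((hasDerivAt_id' y).const_mul k).const_sub a₀)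
    (((hasDerivAt_id' y).const_mul l).const_sub b₀) hD).congr_deriv (by ring)

lemma hasDerivAt_deriv_gauss2_line (hD : 0 < x₀ * w₀ - c₀ ^ 2) (a₀ b₀ k l y : ℝ) :
    HasDerivAt (fun r => deriv (fun r' => gauss2 (a₀ - k * r') (b₀ - l * r') x₀ c₀ w₀) r)
      (gauss2 (a₀ - k * y) (b₀ - l * y) x₀ c₀ w₀ *
        ((k * gauss2ScoreFst (a₀ - k * y) (b₀ - l * y) x₀ c₀ w₀ +
            l * gauss2ScoreSnd (a₀ - k * y) (b₀ - l * y) x₀ c₀ w₀) ^ 2 -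
          (k ^ 2 * w₀ - 2 * k * l * c₀ + l ^ 2 * x₀) / (x₀ * w₀ - c₀ ^ 2))) y := by
  have ha := ((hasDerivAt_id' y).const_mul k).const_sub a₀
  have hb := ((hasDerivAt_id' y).const_mul l).const_sub b₀
  have hfst : HasDerivAt (fun r => gauss2ScoreFst (a₀ - k * r) (b₀ - l * r) x₀ c₀ w₀) _ y :=
    ((hb.const_mul c₀).fun_sub (ha.const_mul w₀)).div_const _
  have hsnd : HasDerivAt (fun r => gauss2ScoreSnd (a₀ - k * r) (b₀ - l * r) x₀ c₀ w₀) _ y :=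
    ((ha.const_mul c₀).fun_sub (hb.const_mul x₀)).div_const _
  simp only [fun r => (hasDerivAt_gauss2_line hD a₀ b₀ k l r).deriv]
  exact ((hasDerivAt_gauss2_line hD a₀ b₀ k l y).fun_mul
    ((hfst.const_mul k).fun_add (hsnd.const_mul l))).fun_neg.congr_deriv (by ring)

end Gaussian

section Coefficients

variable {α σ : ℝ → ℝ}

lemma phiR_pos (α : ℝ → ℝ) (t v : ℝ) : 0 < phiR α t v := exp_pos _

lemma phiR_self (α : ℝ → ℝ) (t : ℝ) : phiR α t t = 1 := by simp [phiR]

lemma phiR_mul_phiR_s10 (hα : Continuous α) (t u v : ℝ) :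
    phiR α t u * phiR α u v = phiR α t v := by
  rw [phiR, phiR, phiR, ← exp_add, ← neg_add, intervalIntegral.integral_add_adjacent_intervals
    (hα.intervalIntegrable t u) (hα.intervalIntegrable u v)]

lemma hasDerivAt_phiR_left (hα : Continuous α) (t v : ℝ) :
    HasDerivAt (fun s => phiR α s v) (α t * phiR α t v) t :=
  (hasDerivAt_integral_left_of_continuous hα t v).fun_neg.exp.congr_deriv <| by
    rw [phiR, neg_neg, mul_comm]

@[fun_prop]
lemma continuous_phiR_s10 {X : Type*} [TopologicalSpace X] {f g : X → ℝ} (hα : Continuous α)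
    (hf : Continuous f) (hg : Continuous g) : Continuous fun x => phiR α (f x) (g x) :=
  (continuous_integral_comp_endpoints hα hf hg).neg.rexp

/-- The loading `B(t,v) = ∫_t^v φ_r(t,u) du` of the compounding variable on the short rate, to which
`Bstar` reduces in the Hull–White case. -/
noncomputable def hullWhiteB (α : ℝ → ℝ) (t v : ℝ) : ℝ := ∫ u in t..v, phiR α t u

lemma psiR_zero (α σ : ℝ → ℝ) (t v : ℝ) : psiR α σ (fun _ => 0) t v = 1 := by simp [psiR]

lemma Bstar_zero (α σ : ℝ → ℝ) (t v : ℝ) : Bstar α σ (fun _ => 0) t v = hullWhiteB α t v := by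
  simp only [Bstar, psiR_zero, one_mul, hullWhiteB]

lemma hullWhiteB_eq (hα : Continuous α) (t v : ℝ) :
    hullWhiteB α t v = phiR α t 0 * ∫ u in t..v, phiR α 0 u := by
  simp only [hullWhiteB, ← intervalIntegral.integral_const_mul, phiR_mul_phiR_s10 hα]

lemma hasDerivAt_hullWhiteB_left (hα : Continuous α) (t v : ℝ) :
    HasDerivAt (fun s => hullWhiteB α s v) (α t * hullWhiteB α t v - 1) t := by
  have hφ : Continuous fun u => phiR α 0 u := by fun_prop
  simp only [hullWhiteB_eq hα]
  refine ((hasDerivAt_phiR_left hα t 0).fun_mul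
    (hasDerivAt_integral_left_of_continuous hφ t v)).congr_deriv ?_
  rw [mul_neg, phiR_mul_phiR_s10 hα, phiR_self]
  ring

lemma hasDerivAt_hullWhiteB_right (hα : Continuous α) (t v : ℝ) :
    HasDerivAt (fun u => hullWhiteB α t u) (phiR α t v) v :=
  have hφ : Continuous fun u => phiR α t u := by fun_prop
  (hφ.integral_hasStrictDerivAt t v).hasDerivAt

@[fun_prop]
lemma continuous_hullWhiteB {X : Type*} [TopologicalSpace X] {f g : X → ℝ} (hα : Continuous α)
    (hf : Continuous f) (hg : Continuous g) : Continuous fun x => hullWhiteB α (f x) (g x) := by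
  have hφ : Continuous fun u => phiR α 0 u := by fun_prop
  have hint := continuous_integral_comp_endpoints hφ hf hg
  simp only [hullWhiteB_eq hα]
  fun_prop

lemma Srz_zero_eq_integral (hα : Continuous α) (hσ : Continuous σ) (t v : ℝ) :
    Srz α σ (fun _ => 0) t v = ∫ u in t..v, phiR α u v * hullWhiteB α u v * σ u ^ 2 :=
  calc
    _ = ∫ u in t..v, ∫ w in t..u, phiR α w u * phiR α w v * σ w ^ 2 := by
      simp only [Srz, Srr, psiR_zero, one_mul, ← intervalIntegral.integral_const_mul]
      congr! 4 with u _ w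
      rw [← phiR_mul_phiR_s10 hα w u v]
      ring
    _ = ∫ w in t..v, ∫ u in w..v, phiR α w u * phiR α w v * σ w ^ 2 :=
      integral_integral_triangle_swap_of_continuous (by unfold uncurry; fun_prop) t v
    _ = _ := by
      simp only [intervalIntegral.integral_mul_const, hullWhiteB, mul_comm (phiR α _ v)]

lemma Szz_zero_eq_integral (hα : Continuous α) (hσ : Continuous σ) (t v : ℝ) :
    Szz α σ (fun _ => 0) t v = ∫ u in t..v, hullWhiteB α u v ^ 2 * σ u ^ 2 := by
  have hB : ∀ w, ∫ u in w..v, 2 * hullWhiteB α w u * phiR α w u = hullWhiteB α w v ^ 2 := by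
    intro w
    rw [intervalIntegral.integral_eq_sub_of_hasDerivAt
      (fun u _ => ((hasDerivAt_hullWhiteB_right hα w u).fun_pow 2).congr_deriv (by simp))
      (Continuous.intervalIntegrable (by fun_prop) _ _)]
    simp [hullWhiteB]
  calc
    _ = ∫ u in t..v, ∫ w in t..u, 2 * hullWhiteB α w u * phiR α w u * σ w ^ 2 := by
      simp only [Szz, psiR_zero, one_mul, Srz_zero_eq_integral hα hσ,
        ← intervalIntegral.integral_const_mul]
      congr! 4
      ring
    _ = ∫ w in t..v, ∫ u in w..v, 2 * hullWhiteB α w u * phiR α w u * σ w ^ 2 :=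
      integral_integral_triangle_swap_of_continuous (by unfold uncurry; fun_prop) t v
    _ = _ := by
      simp only [intervalIntegral.integral_mul_const, hB]

lemma hasDerivAt_Srr_left (hα : Continuous α) (hσ : Continuous σ) (t v : ℝ) :
    HasDerivAt (fun s => Srr α σ s v) (-(phiR α t v ^ 2 * σ t ^ 2)) t :=
  hasDerivAt_integral_left_of_continuous (f := fun u => phiR α u v ^ 2 * σ u ^ 2) (by fun_prop) t v

lemma hasDerivAt_Srz_zero_left (hα : Continuous α) (hσ : Continuous σ) (t v : ℝ) :
    HasDerivAt (fun s => Srz α σ (fun _ => 0) s v)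
      (-(phiR α t v * hullWhiteB α t v * σ t ^ 2)) t := by
  simp only [Srz_zero_eq_integral hα hσ]
  exact hasDerivAt_integral_left_of_continuous
    (f := fun u => phiR α u v * hullWhiteB α u v * σ u ^ 2) (by fun_prop) t v

lemma hasDerivAt_Szz_zero_left (hα : Continuous α) (hσ : Continuous σ) (t v : ℝ) :
    HasDerivAt (fun s => Szz α σ (fun _ => 0) s v) (-(hullWhiteB α t v ^ 2 * σ t ^ 2)) t := by
  simp only [Szz_zero_eq_integral hα hσ]
  exact hasDerivAt_integral_left_of_continuous
    (f := fun u => hullWhiteB α u v ^ 2 * σ u ^ 2) (by fun_prop) t v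

lemma quadraticForm_covariance_eq_integral (hα : Continuous α) (hσ : Continuous σ)
    (t v p q : ℝ) :
    p ^ 2 * Srr α σ t v + 2 * p * q * Srz α σ (fun _ => 0) t v + q ^ 2 * Szz α σ (fun _ => 0) t v =
      ∫ u in t..v, (p * phiR α u v + q * hullWhiteB α u v) ^ 2 * σ u ^ 2 := by
  rw [Srr, Srz_zero_eq_integral hα hσ, Szz_zero_eq_integral hα hσ]
  simp only [← intervalIntegral.integral_const_mul]
  rw [← intervalIntegral.integral_add, ← intervalIntegral.integral_add]
  · congr! 2
    ring
  all_goals exact Continuous.intervalIntegrable (by fun_prop) _ _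

/-- At a zero of `ℓ(u) = p φ_r(u,v) + q B(u,v)` the backward equations give `ℓ' = -q ≠ 0`. -/
lemma eventually_phiR_hullWhiteB_comb_ne_zero (hα : Continuous α) {p q : ℝ}
    (hpq : p ≠ 0 ∨ q ≠ 0) (t v : ℝ) :
    ∀ᶠ u in 𝓝[≠] t, p * phiR α u v + q * hullWhiteB α u v ≠ 0 := by
  by_cases hzero : p * phiR α t v + q * hullWhiteB α t v = 0
  · have hq : q ≠ 0 := by
      rintro rfl
      simp_all [(phiR_pos α t v).ne']
    have hderiv : HasDerivAt (fun u => p * phiR α u v + q * hullWhiteB α u v) (-q) t :=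
      (((hasDerivAt_phiR_left hα t v).const_mul p).fun_add
        ((hasDerivAt_hullWhiteB_left hα t v).const_mul q)).congr_deriv
        (by linear_combination α t * hzero)
    exact hderiv.eventually_ne (neg_ne_zero.2 hq)
  · have hcont : Continuous fun u => p * phiR α u v + q * hullWhiteB α u v := by fun_prop
    exact (hcont.continuousAt.eventually_ne hzero).filter_mono nhdsWithin_le_nhds

lemma quadraticForm_covariance_pos (hα : Continuous α) (hσ : Continuous σ) {t v : ℝ}
    (hσ₀ : ∃ u ∈ Ioo t v, σ u ≠ 0) {p q : ℝ} (hpq : p ≠ 0 ∨ q ≠ 0) :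
    0 < p ^ 2 * Srr α σ t v + 2 * p * q * Srz α σ (fun _ => 0) t v +
      q ^ 2 * Szz α σ (fun _ => 0) t v := by
  obtain ⟨u₀, hu₀, hσu₀⟩ := hσ₀
  have hnear : ∀ᶠ u in 𝓝[≠] u₀, u ∈ Ioo t v ∧ σ u ≠ 0 :=
    ((isOpen_Ioo.eventually_mem hu₀).and (hσ.continuousAt.eventually_ne hσu₀)).filter_mono
      nhdsWithin_le_nhds
  obtain ⟨u, ⟨hu, hσu⟩, hne⟩ :=
    (hnear.and (eventually_phiR_hullWhiteB_comb_ne_zero hα hpq u₀ v)).exists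
  rw [quadraticForm_covariance_eq_integral hα hσ]
  exact intervalIntegral.integral_pos (hu.1.trans hu.2)
    (Continuous.continuousOn (by fun_prop)) (fun _ _ => by positivity)
    ⟨u, Ioo_subset_Icc_self hu, by positivity⟩

lemma posDef_covariance (hα : Continuous α) (hσ : Continuous σ) {t v : ℝ}
    (hσ₀ : ∃ u ∈ Ioo t v, σ u ≠ 0) :
    (!![Srr α σ t v, Srz α σ (fun _ => 0) t v;
      Srz α σ (fun _ => 0) t v, Szz α σ (fun _ => 0) t v]).PosDef := by
  refine .of_dotProduct_mulVec_pos (.ext fun i j => by fin_cases i <;> fin_cases j <;> rfl)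
    fun x hx => ?_
  have hx' : x 0 ≠ 0 ∨ x 1 ≠ 0 := by
    simpa [funext_iff, Fin.forall_fin_two, imp_iff_not_or] using hx
  refine (quadraticForm_covariance_pos hα hσ hσ₀ hx').trans_eq ?_
  simp only [Matrix.mulVec, Matrix.vec2_dotProduct, star_trivial, Matrix.of_apply,
    Matrix.cons_val_zero, Matrix.cons_val_one]
  ring

lemma det_covariance_pos (hα : Continuous α) (hσ : Continuous σ) {t v : ℝ}
    (hσ₀ : ∃ u ∈ Ioo t v, σ u ≠ 0) :
    0 < Srr α σ t v * Szz α σ (fun _ => 0) t v - Srz α σ (fun _ => 0) t v ^ 2 := by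
  simpa only [Matrix.det_fin_two_of, sq] using (posDef_covariance hα hσ hσ₀).det_pos

end Coefficients

theorem HW_kernel_solves_futures_PDE_general {α σ : ℝ → ℝ} (hα : Continuous α)
    (hσc : Continuous σ) {t v : ℝ} (hσ : ∃ u ∈ Ioo t v, σ u ≠ 0) (η ζ y z : ℝ) :
    DifferentiableAt ℝ (fun t' => GhatHW α σ v η ζ y z t') t ∧
    DifferentiableAt ℝ (fun y' => GhatHW α σ v η ζ y' z t) y ∧
    DifferentiableAt ℝ (fun y' => deriv (fun y'' => GhatHW α σ v η ζ y'' z t) y') y ∧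
    DifferentiableAt ℝ (fun z' => GhatHW α σ v η ζ y z' t) z ∧
    deriv (fun t' => GhatHW α σ v η ζ y z t') t
        - α t * y * deriv (fun y' => GhatHW α σ v η ζ y' z t) y
        + y * deriv (fun z' => GhatHW α σ v η ζ y z' t) z
        + (1 / 2) * σ t ^ 2 *
            deriv (fun y' => deriv (fun y'' => GhatHW α σ v η ζ y'' z t) y') y
      = 0 := by
  have hD := det_covariance_pos hα hσc hσ
  simp only [GhatHW, Bstar_zero]
  have ht := hasDerivAt_gauss2 (((hasDerivAt_phiR_left hα t v).mul_const y).const_sub η)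
    (((hasDerivAt_hullWhiteB_left hα t v).mul_const y).const_sub (ζ - z))
    (hasDerivAt_Srr_left hα hσc t v) (hasDerivAt_Srz_zero_left hα hσc t v)
    (hasDerivAt_Szz_zero_left hα hσc t v) hD
  have hy := hasDerivAt_gauss2_line hD η (ζ - z) (phiR α t v) (hullWhiteB α t v) y
  have hyy := hasDerivAt_deriv_gauss2_line hD η (ζ - z) (phiR α t v) (hullWhiteB α t v) y
  have hz := hasDerivAt_gauss2_of_const_cov (hasDerivAt_const z (η - phiR α t v * y))
    (((hasDerivAt_id' z).const_sub ζ).sub_const (hullWhiteB α t v * y)) hD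
  refine ⟨ht.differentiableAt, hy.differentiableAt, hyy.differentiableAt, hz.differentiableAt, ?_⟩
  rw [ht.deriv, hy.deriv, hyy.deriv, hz.deriv]
  ring

theorem HW_kernel_solves_futures_PDE (α σ : ℝ → ℝ)
    (hα : Continuous α) (hσc : Continuous σ) (hσ : ∀ u, 0 < σ u)
    (v η ζ : ℝ) :
    ∀ t : ℝ, t < v → ∀ y z : ℝ,
      DifferentiableAt ℝ (fun t' => GhatHW α σ v η ζ y z t') t ∧
      DifferentiableAt ℝ (fun y' => GhatHW α σ v η ζ y' z t) y ∧
      DifferentiableAt ℝ (fun y' => deriv (fun y'' => GhatHW α σ v η ζ y'' z t) y') y ∧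
      DifferentiableAt ℝ (fun z' => GhatHW α σ v η ζ y z' t) z ∧
      deriv (fun t' => GhatHW α σ v η ζ y z t') t
          - α t * y * deriv (fun y' => GhatHW α σ v η ζ y' z t) y
          + y * deriv (fun z' => GhatHW α σ v η ζ y z' t) z
          + (1 / 2) * σ t ^ 2 *
              deriv (fun y' => deriv (fun y'' => GhatHW α σ v η ζ y'' z t) y') y
        = 0 := by
  intro t htv y z
  obtain ⟨u, hu⟩ := exists_between htv
  exact HW_kernel_solves_futures_PDE_general hα hσc ⟨u, hu, (hσ u).ne'⟩ η ζ y z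
end
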